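/- Cylinder boundedness transfer (used in Proposition 3): Let 1 < p1,p2,p3 < ∞ with 1/p1+1/p2+1/p3 = 1 and set p3' = p3/(p3−1). Let D0 ⊆ ℝ² be measurable and suppose there is a constant C such that ‖T_{D0}(u,v)‖_{L^{p3'}(ℝ)} ≤ C ‖u‖_{L^{p1}(ℝ)} ‖v‖_{L^{p2}(ℝ)} for all Schwartz u,v on ℝ. Let D = {(ξ1,ξ2,ξ3,ξ4) ∈ ℝ⁴ : (ξ1,ξ3) ∈ D0}, where a point of ℝ⁴ = ℝ²×ℝ² is written ((ξ1,ξ2),(ξ3,ξ4)). Then ‖T_D(f,g)‖_{L^{p3'}(ℝ²)} ≤ C ‖f‖_{L^{p1}(ℝ²)} ‖g‖_{L^{p2}(ℝ²)} for all Schwartz f,g on ℝ²; in particular T_D is a bounded bilinear Fourier multiplier from L^{p1}(ℝ²)×L^{p2}(ℝ²) to L^{p3'}(ℝ²). -/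

import Mathlib

open MeasureTheory Filter Topology Set

noncomputable section

abbrev V2 : Type := ℝ × ℝ

def dot2 (x y : V2) : ℝ := x.1 * y.1 + x.2 * y.2

/-- Fourier transform on ℝ². -/
def FT (f : V2 → ℂ) (ξ : V2) : ℂ :=
  ∫ x : V2, Complex.exp (-(2 * Real.pi * dot2 x ξ) * Complex.I) * f x

/-- Fourier transform on ℝ. -/
def FT1 (f : ℝ → ℂ) (ξ : ℝ) : ℂ :=
  ∫ x : ℝ, Complex.exp (-(2 * Real.pi * (x * ξ)) * Complex.I) * f x

/-- The bilinear Fourier multiplier operator with symbol `χ_D`, `D ⊆ ℝ²×ℝ²`. -/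
def TD (D : Set (V2 × V2)) (f g : V2 → ℂ) (x : V2) : ℂ :=
  ∫ ξ : V2 × V2, Set.indicator D (fun _ => (1 : ℂ)) ξ *
    (FT f ξ.1 * (FT g ξ.2 * Complex.exp ((2 * Real.pi * dot2 (ξ.1 + ξ.2) x) * Complex.I)))

/-- The one-dimensional bilinear Fourier multiplier operator with symbol `χ_{D₀}`,
`D₀ ⊆ ℝ×ℝ`. -/
def TD0 (D0 : Set (ℝ × ℝ)) (u v : ℝ → ℂ) (x : ℝ) : ℂ :=
  ∫ ξ : ℝ × ℝ, Set.indicator D0 (fun _ => (1 : ℂ)) ξ *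
    (FT1 u ξ.1 * (FT1 v ξ.2 * Complex.exp ((2 * Real.pi * ((ξ.1 + ξ.2) * x)) * Complex.I)))

open scoped SchwartzMap FourierTransform

lemma SchwartzMap.exists_comp_prodMk_right (f : 𝓢(V2, ℂ)) (y : ℝ) :
    ∃ u : 𝓢(ℝ, ℂ), ∀ x, u x = f (x, y) := by
  have hg : Function.HasTemperateGrowth (fun x : ℝ => ((x, y) : V2)) := by
    have h := ((ContinuousLinearMap.inl ℝ ℝ ℝ).hasTemperateGrowth).add
      (Function.HasTemperateGrowth.const (E := ℝ) ((0, y) : V2))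
    convert h using 1
    ext x <;> simp
  refine ⟨SchwartzMap.compCLM ℂ hg ⟨1, 1, fun x => ?_⟩ f, fun x => rfl⟩
  have : ‖x‖ ≤ ‖((x, y) : V2)‖ := norm_fst_le ((x, y) : V2)
  linarith

lemma SchwartzMap.exists_comp_prodMk_left (f : 𝓢(V2, ℂ)) (x : ℝ) :
    ∃ u : 𝓢(ℝ, ℂ), ∀ y, u y = f (x, y) := by
  obtain ⟨u, hu⟩ := SchwartzMap.exists_comp_prodMk_right
    (SchwartzMap.compCLMOfContinuousLinearEquiv ℂ (ContinuousLinearEquiv.prodComm ℝ ℝ ℝ) f) x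
  exact ⟨u, fun y => hu y⟩

/-- The Fourier transform on `ℝ × ℝ` of a Schwartz function is a Schwartz function. -/
lemma exists_schwartz_eq_FT (f : 𝓢(V2, ℂ)) : ∃ F : 𝓢(V2, ℂ), ∀ ξ, F ξ = FT f ξ := by
  let e := WithLp.prodContinuousLinearEquiv 2 ℝ ℝ ℝ
  let F := 𝓕 (SchwartzMap.compCLMOfContinuousLinearEquiv ℂ e f)
  refine ⟨SchwartzMap.compCLMOfContinuousLinearEquiv ℂ e.symm F, fun ξ => ?_⟩
  have h := (WithLp.volume_preserving_ofLp ℝ ℝ).integral_comp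
    (MeasurableEquiv.toLp 2 (ℝ × ℝ)).symm.measurableEmbedding
    (fun x : V2 => Complex.exp (-(2 * Real.pi * dot2 x ξ) * Complex.I) * f x)
  rw [FT, ← h]
  change F (e.symm ξ) = _
  simp only [F, SchwartzMap.fourier_coe, Real.fourier_eq']
  refine integral_congr_ae (ae_of_all _ fun v => ?_)
  have hv : inner ℝ v (e.symm ξ) = dot2 v.ofLp ξ := by
    simp [dot2, WithLp.prod_inner_apply, e, mul_comm]
  simp only [hv, smul_eq_mul]
  refine congrArg₂ _ (congrArg _ ?_) rfl
  push_cast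
  ring

lemma SchwartzMap.exists_norm_le_inv_one_add_sq (f : 𝓢(V2, ℂ)) :
    ∃ K, ∀ x y, ‖f (x, y)‖ ≤ K * (1 + x ^ 2)⁻¹ := by
  obtain ⟨a, ha⟩ := f.decay 0 0
  obtain ⟨b, hb⟩ := f.decay 2 0
  refine ⟨a + b, fun x y => ?_⟩
  have h0 := ha.2 (x, y)
  have h2 := hb.2 (x, y)
  simp only [norm_iteratedFDeriv_zero, pow_zero, one_mul] at h0 h2
  have hx : x ^ 2 ≤ ‖((x, y) : V2)‖ ^ 2 := by
    rw [← sq_abs]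
    exact pow_le_pow_left₀ (abs_nonneg x) (norm_fst_le ((x, y) : V2)) 2
  rw [← div_eq_mul_inv, le_div_iff₀ (by positivity)]
  nlinarith [norm_nonneg (f (x, y))]

lemma norm_exp_ofReal_mul_I_mul (r : ℝ) (z : ℂ) :
    ‖Complex.exp (r * Complex.I) * z‖ = ‖z‖ := by
  rw [norm_mul, Complex.norm_exp_ofReal_mul_I, one_mul]

lemma continuous_FT1_slice (f : 𝓢(V2, ℂ)) (ξ : ℝ) :
    Continuous fun y => FT1 (fun x => f (x, y)) ξ := by
  obtain ⟨K, hK⟩ := f.exists_norm_le_inv_one_add_sq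
  have hf := f.continuous
  refine continuous_of_dominated (bound := fun x => K * (1 + x ^ 2)⁻¹) (fun y => ?_)
    (fun y => ae_of_all _ fun x => ?_) (integrable_inv_one_add_sq.const_mul K)
    (ae_of_all _ fun x => ?_)
  · exact Continuous.aestronglyMeasurable (by fun_prop)
  · have := norm_exp_ofReal_mul_I_mul (-(2 * Real.pi * (x * ξ))) (f (x, y))
    push_cast at this
    rw [this]
    exact hK x y
  · fun_prop

lemma integrable_exp_mul {α : Type*} [MeasurableSpace α] {μ : Measure α} {f : α → ℂ}
    (hf : Integrable f μ) {r : α → ℝ} (hr : AEStronglyMeasurable r μ) :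
    Integrable (fun x => Complex.exp (r x * Complex.I) * f x) μ := by
  refine hf.mono (AEStronglyMeasurable.mul ?_ hf.1)
    (ae_of_all _ fun x => (norm_exp_ofReal_mul_I_mul _ _).le)
  exact (show Continuous fun t : ℝ => Complex.exp (t * Complex.I) by
    fun_prop).comp_aestronglyMeasurable hr

lemma integrable_exp_mul_schwartz (f : 𝓢(V2, ℂ)) (ξ : ℝ) :
    Integrable (fun p : ℝ × ℝ => Complex.exp (-(2 * Real.pi * (p.1 * ξ)) * Complex.I) * f p) := by
  have := integrable_exp_mul (f.integrable (μ := volume)) (r := fun p : ℝ × ℝ => -(2 * Real.pi * (p.1 * ξ)))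
    (Continuous.aestronglyMeasurable (by fun_prop))
  simpa using this

lemma integrable_FT1_slice (f : 𝓢(V2, ℂ)) (ξ : ℝ) :
    Integrable fun y => FT1 (fun x => f (x, y)) ξ :=
  (integrable_exp_mul_schwartz f ξ).integral_prod_right

lemma fourier_FT1_slice (f : 𝓢(V2, ℂ)) (ξ η : ℝ) :
    𝓕 (fun y => FT1 (fun x => f (x, y)) ξ) η = FT f (ξ, η) := by
  have hint : Integrable (fun p : ℝ × ℝ =>
      Complex.exp (-(2 * Real.pi * dot2 p (ξ, η)) * Complex.I) * f p) := by
    have := integrable_exp_mul (f.integrable (μ := volume)) (r := fun p : ℝ × ℝ => -(2 * Real.pi * dot2 p (ξ, η)))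
      (Continuous.aestronglyMeasurable (by unfold dot2; fun_prop))
    simpa using this
  rw [Measure.volume_eq_prod] at hint
  rw [FT, Measure.volume_eq_prod, integral_prod_symm _ hint, Real.fourier_eq']
  refine integral_congr_ae (ae_of_all _ fun y => ?_)
  simp only [FT1, smul_eq_mul]
  rw [← integral_const_mul]
  refine integral_congr_ae (ae_of_all _ fun x => ?_)
  simp only [dot2]
  rw [← mul_assoc, ← Complex.exp_add]
  congr 2
  simp
  ring

/-- Fourier inversion in the second variable. -/
lemma integral_FT_mul_exp (f : 𝓢(V2, ℂ)) (ξ y : ℝ) :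
    ∫ η : ℝ, FT f (ξ, η) * Complex.exp ((2 * Real.pi * (η * y)) * Complex.I) =
      FT1 (fun x => f (x, y)) ξ := by
  obtain ⟨F, hF⟩ := exists_schwartz_eq_FT f
  obtain ⟨u, hu⟩ := F.exists_comp_prodMk_left ξ
  have hfour : 𝓕 (fun y => FT1 (fun x => f (x, y)) ξ) = u := by
    ext η
    rw [fourier_FT1_slice, hu, hF]
  have hinv := (continuous_FT1_slice f ξ).fourierInv_fourier_eq (integrable_FT1_slice f ξ)
    (hfour ▸ u.integrable)
  rw [← congrFun hinv y, Real.fourierInv_eq']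
  refine integral_congr_ae (ae_of_all _ fun η => ?_)
  simp only [fourier_FT1_slice, smul_eq_mul]
  rw [mul_comm]
  congr 2
  simp
  ring

lemma volume_preserving_prodProdProdComm :
    MeasurePreserving (Equiv.prodProdProdComm ℝ ℝ ℝ ℝ) := by
  have h1 : MeasurePreserving (fun p : ℝ × ℝ × ℝ => (p.2.1, p.1, p.2.2)) :=
    (volume_preserving_prodAssoc (α₁ := ℝ) (β₁ := ℝ) (γ₁ := ℝ)).comp
      ((Measure.measurePreserving_swap.prod (MeasurePreserving.id volume)).comp
        (volume_preserving_prodAssoc (α₁ := ℝ) (β₁ := ℝ) (γ₁ := ℝ)).symm)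
  exact (volume_preserving_prodAssoc (α₁ := ℝ) (β₁ := ℝ) (γ₁ := ℝ × ℝ)).symm.comp
    (((MeasurePreserving.id volume).prod h1).comp
      (volume_preserving_prodAssoc (α₁ := ℝ) (β₁ := ℝ) (γ₁ := ℝ × ℝ)))

lemma measurableEmbedding_prodProdProdComm :
    MeasurableEmbedding (Equiv.prodProdProdComm ℝ ℝ ℝ ℝ) :=
  (Homeomorph.prodProdProdComm ℝ ℝ ℝ ℝ).measurableEmbedding

/-- The set of `((ξ₁, ξ₂), (ξ₃, ξ₄))` with `(ξ₁, ξ₃) ∈ D₀`. -/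
def planarCylinder (D0 : Set (ℝ × ℝ)) : Set (V2 × V2) := {p | (p.1.1, p.2.1) ∈ D0}

lemma measurableSet_planarCylinder {D0 : Set (ℝ × ℝ)} (hD0 : MeasurableSet D0) :
    MeasurableSet (planarCylinder D0) :=
  hD0.preimage (by fun_prop : Measurable fun p : V2 × V2 => (p.1.1, p.2.1))

lemma measurable_FT (f : 𝓢(V2, ℂ)) : Measurable (FT f) := by
  obtain ⟨F, hF⟩ := exists_schwartz_eq_FT f
  exact (funext hF : ⇑F = FT f) ▸ F.continuous.measurable

lemma integrable_FT (f : 𝓢(V2, ℂ)) : Integrable (FT f) := by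
  obtain ⟨F, hF⟩ := exists_schwartz_eq_FT f
  exact (funext hF : ⇑F = FT f) ▸ F.integrable

lemma integrable_TD_integrand {D : Set (V2 × V2)} (hD : MeasurableSet D) (f g : 𝓢(V2, ℂ))
    (x : V2) :
    Integrable fun ξ : V2 × V2 => indicator D (fun _ => (1 : ℂ)) ξ *
      (FT f ξ.1 * (FT g ξ.2 *
        Complex.exp ((2 * Real.pi * dot2 (ξ.1 + ξ.2) x) * Complex.I))) := by
  have h := integrable_exp_mul ((integrable_FT f).mul_prod (integrable_FT g))
    (r := fun ξ : V2 × V2 => 2 * Real.pi * dot2 (ξ.1 + ξ.2) x)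
    (Continuous.aestronglyMeasurable (by unfold dot2; fun_prop))
  refine (h.indicator hD).congr (ae_of_all _ fun ξ => ?_)
  by_cases hξ : ξ ∈ D
  · simp [hξ]
    ring
  · simp [hξ]

/-- On each horizontal line `T_D` acts as `T_{D₀}` on the restrictions of `f` and `g`. -/
lemma TD_planarCylinder_apply {D0 : Set (ℝ × ℝ)} (hD0 : MeasurableSet D0) (f g : 𝓢(V2, ℂ)) (x y : ℝ) :
    TD (planarCylinder D0) f g (x, y) = TD0 D0 (fun s => f (s, y)) (fun s => g (s, y)) x := by
  have hint := integrable_TD_integrand (measurableSet_planarCylinder hD0) f g (x, y)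
  rw [← volume_preserving_prodProdProdComm.integrable_comp_emb
    measurableEmbedding_prodProdProdComm, Function.comp_def] at hint
  rw [TD, ← volume_preserving_prodProdProdComm.integral_comp measurableEmbedding_prodProdProdComm]
  rw [Measure.volume_eq_prod (ℝ × ℝ) (ℝ × ℝ)] at hint ⊢
  rw [integral_prod _ hint, TD0]
  refine integral_congr_ae (ae_of_all _ fun ξ => ?_)
  simp only
  rw [← integral_FT_mul_exp f ξ.1 y, ← integral_FT_mul_exp g ξ.2 y, ← mul_assoc (∫ η : ℝ, _),
    ← integral_prod_mul, ← integral_mul_const, ← integral_const_mul]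
  refine integral_congr_ae (ae_of_all _ fun η => ?_)
  have hexp : Complex.exp (2 * Real.pi * dot2 ((ξ.1, η.1) + (ξ.2, η.2)) (x, y) * Complex.I) =
      Complex.exp (2 * Real.pi * (η.1 * y) * Complex.I) *
      Complex.exp (2 * Real.pi * (η.2 * y) * Complex.I) *
      Complex.exp (2 * Real.pi * ((ξ.1 + ξ.2) * x) * Complex.I) := by
    rw [← Complex.exp_add, ← Complex.exp_add]
    congr 1
    simp [dot2]
    ring
  simp only [Equiv.prodProdProdComm_apply, hexp]
  have hind : indicator (planarCylinder D0) (fun _ => (1 : ℂ)) ((ξ.1, η.1), (ξ.2, η.2)) =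
      indicator D0 (fun _ => (1 : ℂ)) ξ := rfl
  rw [hind]
  ring

lemma stronglyMeasurable_TD {D : Set (V2 × V2)} (hD : MeasurableSet D) (f g : 𝓢(V2, ℂ)) :
    StronglyMeasurable (TD D f g) := by
  refine StronglyMeasurable.integral_prod_right (Measurable.stronglyMeasurable ?_)
  have hf := measurable_FT f
  have hg := measurable_FT g
  have hind : Measurable (indicator D fun _ => (1 : ℂ)) := measurable_const.indicator hD
  have hexp : Measurable fun p : V2 × V2 × V2 =>
      Complex.exp ((2 * Real.pi * dot2 (p.2.1 + p.2.2) p.1) * Complex.I) :=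
    Continuous.measurable (by unfold dot2; fun_prop)
  exact (hind.comp measurable_snd).mul ((hf.comp (measurable_fst.comp measurable_snd)).mul
    ((hg.comp (measurable_snd.comp measurable_snd)).mul hexp))

lemma eLpNorm_ofReal_eq {α : Type*} [MeasurableSpace α] {μ : Measure α} {p : ℝ} (hp : 0 < p)
    (h : α → ℂ) : eLpNorm h (ENNReal.ofReal p) μ = (∫⁻ x, ‖h x‖ₑ ^ p ∂μ) ^ p⁻¹ := by
  rw [eLpNorm_eq_lintegral_rpow_enorm_toReal (by simpa using hp) ENNReal.ofReal_ne_top,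
    ENNReal.toReal_ofReal hp.le, one_div]

/-- If on almost every horizontal line the `L^q` norm of `F` is controlled by the product of the
`L^{p₁}` norm of `f` and the `L^{p₂}` norm of `g`, then the same holds on the product space. -/
lemma eLpNorm_prod_le_of_slices {α β : Type*} [MeasurableSpace α] [MeasurableSpace β]
    {μ : Measure α} {ν : Measure β} [SFinite μ] [SFinite ν] {q p1 p2 : ℝ}
    (hq : 0 < q) (hp1 : 0 < p1) (hp2 : 0 < p2) (hqp : q⁻¹ = p1⁻¹ + p2⁻¹) {c : ENNReal}
    {F f g : α × β → ℂ} (hF : AEStronglyMeasurable F (μ.prod ν))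
    (hf : AEStronglyMeasurable f (μ.prod ν)) (hg : AEStronglyMeasurable g (μ.prod ν))
    (h : ∀ᵐ y ∂ν, eLpNorm (fun x => F (x, y)) (ENNReal.ofReal q) μ ≤
      c * (eLpNorm (fun x => f (x, y)) (ENNReal.ofReal p1) μ *
        eLpNorm (fun x => g (x, y)) (ENNReal.ofReal p2) μ)) :
    eLpNorm F (ENNReal.ofReal q) (μ.prod ν) ≤
      c * (eLpNorm f (ENNReal.ofReal p1) (μ.prod ν) *
        eLpNorm g (ENNReal.ofReal p2) (μ.prod ν)) := by
  simp only [eLpNorm_ofReal_eq hq, eLpNorm_ofReal_eq hp1, eLpNorm_ofReal_eq hp2] at h ⊢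
  have hf' := hf.enorm.pow_const p1
  have hg' := hg.enorm.pow_const p2
  rw [lintegral_prod_symm _ (hF.enorm.pow_const q), lintegral_prod_symm _ hf',
    lintegral_prod_symm _ hg', ENNReal.rpow_inv_le_iff hq]
  have hsum : p1⁻¹ * q + p2⁻¹ * q = 1 := by
    rw [← add_mul, ← hqp, inv_mul_cancel₀ hq.ne']
  calc
    _ ≤ ∫⁻ y, c ^ q * ((∫⁻ x, ‖f (x, y)‖ₑ ^ p1 ∂μ) ^ (p1⁻¹ * q) *
          (∫⁻ x, ‖g (x, y)‖ₑ ^ p2 ∂μ) ^ (p2⁻¹ * q)) ∂ν := by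
        refine lintegral_mono_ae (h.mono fun y hy => ?_)
        rw [ENNReal.rpow_inv_le_iff hq] at hy
        simpa only [ENNReal.mul_rpow_of_nonneg _ _ hq.le, ← ENNReal.rpow_mul] using hy
    _ = c ^ q * ∫⁻ y, (∫⁻ x, ‖f (x, y)‖ₑ ^ p1 ∂μ) ^ (p1⁻¹ * q) *
          (∫⁻ x, ‖g (x, y)‖ₑ ^ p2 ∂μ) ^ (p2⁻¹ * q) ∂ν :=
        lintegral_const_mul'' _ ((hf'.lintegral_prod_left'.pow_const _).mul
          (hg'.lintegral_prod_left'.pow_const _))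
    _ ≤ c ^ q * ((∫⁻ y, ∫⁻ x, ‖f (x, y)‖ₑ ^ p1 ∂μ ∂ν) ^ (p1⁻¹ * q) *
          (∫⁻ y, ∫⁻ x, ‖g (x, y)‖ₑ ^ p2 ∂μ ∂ν) ^ (p2⁻¹ * q)) := by
        gcongr
        exact ENNReal.lintegral_mul_norm_pow_le hf'.lintegral_prod_left' hg'.lintegral_prod_left'
          (by positivity) (by positivity) hsum
    _ = _ := by simp only [ENNReal.mul_rpow_of_nonneg _ _ hq.le, ← ENNReal.rpow_mul]

/-- **Cylinder boundedness transfer.** If `T_{D₀}` is bounded from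
`L^{p₁}(ℝ) × L^{p₂}(ℝ)` to `L^{p₃'}(ℝ)` with constant `C`, then for the cylinder
`D = {((ξ₁,ξ₂),(ξ₃,ξ₄)) : (ξ₁,ξ₃) ∈ D₀}` the operator `T_D` is bounded from
`L^{p₁}(ℝ²) × L^{p₂}(ℝ²)` to `L^{p₃'}(ℝ²)` with the same constant. -/
theorem cylinder_transfer (p1 p2 p3 : ℝ) (hp1 : 1 < p1) (hp2 : 1 < p2) (hp3 : 1 < p3)
    (hsum : p1⁻¹ + p2⁻¹ + p3⁻¹ = 1)
    (D0 : Set (ℝ × ℝ)) (hD0 : MeasurableSet D0) (C : ℝ)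
    (hC : ∀ u v : SchwartzMap ℝ ℂ,
      eLpNorm (TD0 D0 ⇑u ⇑v) (ENNReal.ofReal (p3 / (p3 - 1))) volume ≤
        ENNReal.ofReal C * (eLpNorm (⇑u) (ENNReal.ofReal p1) volume *
          eLpNorm (⇑v) (ENNReal.ofReal p2) volume)) :
    ∀ f g : SchwartzMap V2 ℂ,
      eLpNorm (TD {p : V2 × V2 | (p.1.1, p.2.1) ∈ D0} ⇑f ⇑g)
          (ENNReal.ofReal (p3 / (p3 - 1))) volume ≤
        ENNReal.ofReal C * (eLpNorm (⇑f) (ENNReal.ofReal p1) volume *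
          eLpNorm (⇑g) (ENNReal.ofReal p2) volume) := by
  intro f g
  have hq : (p3 / (p3 - 1))⁻¹ = p1⁻¹ + p2⁻¹ := by
    have h3 : p3 ≠ 0 := by positivity
    rw [inv_div, sub_div, div_self h3, one_div]
    linarith
  refine eLpNorm_prod_le_of_slices (div_pos (by linarith) (by linarith)) (by linarith)
    (by linarith) hq
    (stronglyMeasurable_TD (measurableSet_planarCylinder hD0) f g).aestronglyMeasurable
    f.continuous.aestronglyMeasurable g.continuous.aestronglyMeasurable
    (ae_of_all _ fun y => ?_)
  obtain ⟨u, hu⟩ := f.exists_comp_prodMk_right y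
  obtain ⟨v, hv⟩ := g.exists_comp_prodMk_right y
  have hT : (fun x => TD (planarCylinder D0) f g (x, y)) = TD0 D0 u v := by
    ext x
    rw [TD_planarCylinder_apply hD0, funext hu, funext hv]
  have h := hC u v
  rw [← hT, funext hu, funext hv] at h
  exact h
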